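/- arXiv:1904.13317 — 5 statements merged into one kernel-verified Lean document; each statement's English description precedes it below -/
import Mathlib

section
/- Each entry b_{ij}(q) of the inertia matrix B(q) = Σ_{i=1}^n [ m_i J_i(q)^T J_i(q) + J_{ω,i}(q)^T R_i^0(q) I_i (R_i^0(q))^T J_{ω,i}(q) ] is a polynomial function of the augmented position variables: there exists a real multivariate polynomial in formal variables c_r, s_r (r ∈ I_r) and x_p (p ∈ I_p), of total degree at most 2n, whose every monomial satisfies deg(c_b) + deg(s_b) ≤ 2 for each b ∈ I_r and deg(x_p) ≤ 2 for each p ∈ I_p, and whose evaluation at c_r = cos(q_r), s_r = sin(q_r), x_p = q_p equals b_{ij}(q) for all q ∈ ℝ^n. -/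
/-!
The set of functions of `q` that are polynomials with a prescribed degree bound `D b` at each joint
`b` is closed under sums, and products add the bounds. Entries of the relative rotation and
translation of joint `b` have degree one at `b` and zero elsewhere, so products over distinct joints
have degree at most one at every joint. Hence the center of mass has degree one at each joint, and
so do its partial derivatives, since `d/dq` only exchanges `cos q_b` and `sin q_b` or removes `q_b`
(`JointSmooth` carries the derivatives along). This bounds `J_iᵀ J_i` by degree two at each joint.

For the angular part a naive count gives degree four. It drops to two because the rotations are
orthogonal: with `R_i^0 = R_{j-1}^0 M`, the `j`-th row of `J_{ω,i}ᵀ R_i^0` is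
`λ_j e_3ᵀ (R_{j-1}^0)ᵀ R_i^0 = λ_j e_3ᵀ M`, and `M` involves each of the joints `j, …, i` once.
The total degree bound `2n` is the sum of the bounds over the joints.
-/

noncomputable section

open Matrix Real

/-- Elementary rotation about the z-axis. -/
def RzMat (θ : ℝ) : Matrix (Fin 3) (Fin 3) ℝ :=
  !![Real.cos θ, -Real.sin θ, 0;
     Real.sin θ, Real.cos θ, 0;
     0, 0, 1]

/-- Elementary rotation about the x-axis. -/
def RxMat (α : ℝ) : Matrix (Fin 3) (Fin 3) ℝ :=
  !![1, 0, 0;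
     0, Real.cos α, -Real.sin α;
     0, Real.sin α, Real.cos α]

/-- DH joint angle `θ_b(q)`; `rev b = true` means that joint `b` is revolute
(`θ_b = θ0_b + q_b`), otherwise it is prismatic (`θ_b = θ0_b`). -/
def dhTheta {n : ℕ} (rev : Fin n → Bool) (θ0 : Fin n → ℝ) (q : Fin n → ℝ) (b : Fin n) : ℝ :=
  θ0 b + if rev b then q b else 0

/-- DH joint offset `d_b(q)`: `d_b = d0_b` for a revolute joint, `d_b = d0_b + q_b`
for a prismatic one. -/
def dhD {n : ℕ} (rev : Fin n → Bool) (d0 : Fin n → ℝ) (q : Fin n → ℝ) (b : Fin n) : ℝ :=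
  d0 b + if rev b then 0 else q b

/-- Relative link rotation `R_b^{b-1}(q) = R_z(θ_b) R_x(α_b)`
(0-based index `b : Fin n` for joint `b+1`). -/
def dhRrel {n : ℕ} (rev : Fin n → Bool) (θ0 αDH : Fin n → ℝ) (q : Fin n → ℝ) (b : Fin n) :
    Matrix (Fin 3) (Fin 3) ℝ :=
  RzMat (dhTheta rev θ0 q b) * RxMat (αDH b)

/-- Cumulative rotation `R_i^0(q) = R_1^0(q) ⋯ R_i^{i-1}(q)` (meaningful for `i ≤ n`),
with `R_0^0 = 1`. -/
def dhR0 {n : ℕ} (rev : Fin n → Bool) (θ0 αDH : Fin n → ℝ) (q : Fin n → ℝ) :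
    ℕ → Matrix (Fin 3) (Fin 3) ℝ
  | 0 => 1
  | j + 1 =>
      dhR0 rev θ0 αDH q j * (if h : j < n then dhRrel rev θ0 αDH q ⟨j, h⟩ else 1)

/-- Relative link translation `l_b^{b-1}(q) = (0,0,d_b)ᵀ + R_z(θ_b) (a_b,0,0)ᵀ`. -/
def dhLrel {n : ℕ} (rev : Fin n → Bool) (θ0 d0 aDH : Fin n → ℝ) (q : Fin n → ℝ) (b : Fin n) :
    Fin 3 → ℝ :=
  ![0, 0, dhD rev d0 q b] + (RzMat (dhTheta rev θ0 q b)).mulVec ![aDH b, 0, 0]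

/-- Center of mass `c_i(q) = Σ_{j=1}^{i} R_{j-1}^0(q) l_j^{j-1}(q) + R_i^0(q) c_i^i`
(0-based index `i : Fin n` for link `i+1`; `cloc i` is the constant `c_i^i`). -/
def dhCom {n : ℕ} (rev : Fin n → Bool) (θ0 d0 aDH αDH : Fin n → ℝ)
    (cloc : Fin n → Fin 3 → ℝ) (q : Fin n → ℝ) (i : Fin n) : Fin 3 → ℝ :=
  (∑ j : Fin n, if j ≤ i then (dhR0 rev θ0 αDH q j.val).mulVec (dhLrel rev θ0 d0 aDH q j) else 0)
    + (dhR0 rev θ0 αDH q (i.val + 1)).mulVec (cloc i)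

/-- Partial derivative of `f : ℝⁿ → ℝ` with respect to the `k`-th coordinate, at `q`. -/
def pd {n : ℕ} (f : (Fin n → ℝ) → ℝ) (k : Fin n) (q : Fin n → ℝ) : ℝ :=
  deriv (fun t => f (Function.update q k t)) (q k)

/-- Linear Jacobian `J_i(q) ∈ ℝ^{3×n}`, whose `k`-th column is `∂c_i/∂q_k`. -/
def dhJlin {n : ℕ} (rev : Fin n → Bool) (θ0 d0 aDH αDH : Fin n → ℝ)
    (cloc : Fin n → Fin 3 → ℝ) (q : Fin n → ℝ) (i : Fin n) : Matrix (Fin 3) (Fin n) ℝ :=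
  Matrix.of fun r k => pd (fun q' => dhCom rev θ0 d0 aDH αDH cloc q' i r) k q

/-- Angular Jacobian `J_{ω,i}(q) ∈ ℝ^{3×n}`: the `j`-th column is `λ_j R_{j-1}^0(q) e_3`
for `j ≤ i` and `0` for `j > i`, where `λ_j = 1` iff joint `j` is revolute. -/
def dhJang {n : ℕ} (rev : Fin n → Bool) (θ0 αDH : Fin n → ℝ) (q : Fin n → ℝ) (i : Fin n) :
    Matrix (Fin 3) (Fin n) ℝ :=
  Matrix.of fun r j =>
    if j ≤ i then
      (if rev j then (1 : ℝ) else 0) * (dhR0 rev θ0 αDH q j.val).mulVec ![0, 0, 1] r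
    else 0

/-- Inertia matrix
`B(q) = Σ_i [ m_i J_i(q)ᵀ J_i(q) + J_{ω,i}(q)ᵀ R_i^0(q) I_i (R_i^0(q))ᵀ J_{ω,i}(q) ]`. -/
def dhB {n : ℕ} (rev : Fin n → Bool) (θ0 d0 aDH αDH : Fin n → ℝ)
    (cloc : Fin n → Fin 3 → ℝ) (m : Fin n → ℝ) (Iner : Fin n → Matrix (Fin 3) (Fin 3) ℝ)
    (q : Fin n → ℝ) : Matrix (Fin n) (Fin n) ℝ :=
  ∑ i : Fin n,
    (m i • ((dhJlin rev θ0 d0 aDH αDH cloc q i)ᵀ * dhJlin rev θ0 d0 aDH αDH cloc q i)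
      + (dhJang rev θ0 αDH q i)ᵀ * dhR0 rev θ0 αDH q (i.val + 1) * Iner i *
          (dhR0 rev θ0 αDH q (i.val + 1))ᵀ * dhJang rev θ0 αDH q i)

/-- `i`-th component of the Coriolis contribution
`(C(q,q̇) q̇)_i = Σ_j Σ_k ( ∂b_{ij}/∂q_k − (1/2) ∂b_{jk}/∂q_i ) q̇_k q̇_j`. -/
def dhCor {n : ℕ} (rev : Fin n → Bool) (θ0 d0 aDH αDH : Fin n → ℝ)
    (cloc : Fin n → Fin 3 → ℝ) (m : Fin n → ℝ) (Iner : Fin n → Matrix (Fin 3) (Fin 3) ℝ)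
    (q qd : Fin n → ℝ) (i : Fin n) : ℝ :=
  ∑ j : Fin n, ∑ k : Fin n,
    (pd (fun q' => dhB rev θ0 d0 aDH αDH cloc m Iner q' i j) k q
        - (1 / 2) * pd (fun q' => dhB rev θ0 d0 aDH αDH cloc m Iner q' j k) i q)
      * qd k * qd j

/-- Potential energy `U(q) = Σ_j m_j g_0ᵀ c_j(q)`. -/
def dhU {n : ℕ} (rev : Fin n → Bool) (θ0 d0 aDH αDH : Fin n → ℝ)
    (cloc : Fin n → Fin 3 → ℝ) (m : Fin n → ℝ) (g0 : Fin 3 → ℝ) (q : Fin n → ℝ) : ℝ :=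
  ∑ j : Fin n, m j * ∑ r : Fin 3, g0 r * dhCom rev θ0 d0 aDH αDH cloc q j r

/-- Gravity torque `g_i(q) = ∂U/∂q_i`. -/
def dhGrav {n : ℕ} (rev : Fin n → Bool) (θ0 d0 aDH αDH : Fin n → ℝ)
    (cloc : Fin n → Fin 3 → ℝ) (m : Fin n → ℝ) (g0 : Fin 3 → ℝ)
    (q : Fin n → ℝ) (i : Fin n) : ℝ :=
  pd (dhU rev θ0 d0 aDH αDH cloc m g0) i q

/-- Inverse dynamics torque `τ_i(q,q̇,q̈) = ( B(q) q̈ + C(q,q̇) q̇ + g(q) )_i`. -/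
def dhTau {n : ℕ} (rev : Fin n → Bool) (θ0 d0 aDH αDH : Fin n → ℝ)
    (cloc : Fin n → Fin 3 → ℝ) (m : Fin n → ℝ) (Iner : Fin n → Matrix (Fin 3) (Fin 3) ℝ)
    (g0 : Fin 3 → ℝ) (q qd qdd : Fin n → ℝ) (i : Fin n) : ℝ :=
  (∑ k : Fin n, dhB rev θ0 d0 aDH αDH cloc m Iner q i k * qdd k)
    + dhCor rev θ0 d0 aDH αDH cloc m Iner q qd i
    + dhGrav rev θ0 d0 aDH αDH cloc m g0 q i

/-- Formal position variables: `.inl b ↦ c_b = cos q_b`, `.inr (.inl b) ↦ s_b = sin q_b`,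
`.inr (.inr b) ↦ x_b = q_b`. -/
abbrev PosVar (n : ℕ) := Fin n ⊕ (Fin n ⊕ Fin n)

/-- The formal variable `c_b` (for `cos q_b`). -/
def cVar {n : ℕ} (b : Fin n) : PosVar n := Sum.inl b

/-- The formal variable `s_b` (for `sin q_b`). -/
def sVar {n : ℕ} (b : Fin n) : PosVar n := Sum.inr (Sum.inl b)

/-- The formal variable `x_b` (for the prismatic coordinate `q_b`). -/
def xVar {n : ℕ} (b : Fin n) : PosVar n := Sum.inr (Sum.inr b)

/-- Evaluation of the formal position variables at a configuration `q`. -/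
def posEval {n : ℕ} (q : Fin n → ℝ) : PosVar n → ℝ :=
  Sum.elim (fun b => Real.cos (q b)) (Sum.elim (fun b => Real.sin (q b)) fun b => q b)

/-- Index set of the velocity-product variables `v_{jk}`, `j ≤ k`. -/
abbrev VelIdx (n : ℕ) := {pr : Fin n × Fin n // pr.1 ≤ pr.2}

/-- Formal dynamic variables: the position variables together with the velocity products
`v_{jk}` and the accelerations `a_k`. -/
abbrev DynVar (n : ℕ) := PosVar n ⊕ (VelIdx n ⊕ Fin n)

/-- The formal variable `v_{jk}` (for `q̇_j q̇_k`). -/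
def vVar {n : ℕ} (jk : VelIdx n) : DynVar n := Sum.inr (Sum.inl jk)

/-- The formal variable `a_k` (for `q̈_k`). -/
def aVar {n : ℕ} (k : Fin n) : DynVar n := Sum.inr (Sum.inr k)

/-- Evaluation of the formal dynamic variables at `(q, q̇, q̈)`. -/
def dynEval {n : ℕ} (q qd qdd : Fin n → ℝ) : DynVar n → ℝ :=
  Sum.elim (posEval q) (Sum.elim (fun jk => qd jk.val.1 * qd jk.val.2) qdd)

/-! ### Polynomials with bounded degree at each joint -/

/-- `f` is a polynomial in the position variables allowed by `rev` (`c_b, s_b` for revolute `b`,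
`x_b` for prismatic `b`) whose every monomial has degree at most `D b` in the variables of
joint `b`. -/
def JointPoly {n : ℕ} (rev : Fin n → Bool) (D : Fin n → ℕ) (f : (Fin n → ℝ) → ℝ) : Prop :=
  ∃ P : MvPolynomial (PosVar n) ℝ,
    (∀ μ ∈ P.support, ∀ b : Fin n,
      μ (cVar b) + μ (sVar b) ≤ (if rev b then D b else 0) ∧
      μ (xVar b) ≤ (if rev b then 0 else D b)) ∧
    ∀ q, MvPolynomial.eval (posEval q) P = f q

namespace JointPoly

variable {n : ℕ} {rev : Fin n → Bool} {D E : Fin n → ℕ} {f g : (Fin n → ℝ) → ℝ}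

lemma mono (h : JointPoly rev D f) (hDE : D ≤ E) : JointPoly rev E f := by
  obtain ⟨P, hP, he⟩ := h
  refine ⟨P, fun μ hμ b => ?_, he⟩
  have h1 := hP μ hμ b
  have h2 : D b ≤ E b := hDE b
  split_ifs at h1 ⊢ <;> omega

lemma const (c : ℝ) : JointPoly rev D (fun _ => c) := by
  classical
  refine ⟨MvPolynomial.C c, fun μ hμ b => ?_, by simp⟩
  rw [MvPolynomial.mem_support_iff, MvPolynomial.coeff_C] at hμ
  have : μ = 0 := by
    by_contra h
    exact hμ (if_neg (Ne.symm h))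
  simp [this]

lemma add (hf : JointPoly rev D f) (hg : JointPoly rev D g) :
    JointPoly rev D (fun q => f q + g q) := by
  classical
  obtain ⟨P, hP, hPe⟩ := hf
  obtain ⟨Q, hQ, hQe⟩ := hg
  refine ⟨P + Q, fun μ hμ => ?_, fun q => by simp [hPe, hQe]⟩
  rcases Finset.mem_union.1 (MvPolynomial.support_add hμ) with h | h
  · exact hP μ h
  · exact hQ μ h

lemma mul (hf : JointPoly rev D f) (hg : JointPoly rev E g) :
    JointPoly rev (D + E) (fun q => f q * g q) := by
  classical
  obtain ⟨P, hP, hPe⟩ := hf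
  obtain ⟨Q, hQ, hQe⟩ := hg
  refine ⟨P * Q, fun μ hμ b => ?_, fun q => by simp [hPe, hQe]⟩
  obtain ⟨ν, hν, ξ, hξ, rfl⟩ := Finset.mem_add.1 (MvPolynomial.support_mul P Q hμ)
  have h1 := hP ν hν b
  have h2 := hQ ξ hξ b
  simp only [Finsupp.add_apply, Pi.add_apply]
  split_ifs at h1 h2 ⊢ <;> omega

lemma sum {ι : Type*} (s : Finset ι) {F : ι → (Fin n → ℝ) → ℝ}
    (h : ∀ i ∈ s, JointPoly rev D (F i)) : JointPoly rev D (fun q => ∑ i ∈ s, F i q) := by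
  classical
  induction s using Finset.induction_on with
  | empty => simpa using const 0
  | insert a s ha ih =>
    simp only [Finset.sum_insert ha]
    exact (h a (by simp)).add (ih fun i hi => h i (by simp [hi]))

lemma cos {b : Fin n} (hb : rev b = true) :
    JointPoly rev (Pi.single b 1) (fun q => Real.cos (q b)) := by
  classical
  refine ⟨MvPolynomial.X (cVar b), fun μ hμ a => ?_, by simp [posEval, cVar]⟩
  rw [MvPolynomial.support_X, Finset.mem_singleton] at hμ
  subst hμ
  by_cases h : a = b
  · subst h; simp [hb, cVar, sVar, xVar]
  · simp [h, cVar, sVar, xVar]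

lemma sin {b : Fin n} (hb : rev b = true) :
    JointPoly rev (Pi.single b 1) (fun q => Real.sin (q b)) := by
  classical
  refine ⟨MvPolynomial.X (sVar b), fun μ hμ a => ?_, by simp [posEval, sVar]⟩
  rw [MvPolynomial.support_X, Finset.mem_singleton] at hμ
  subst hμ
  by_cases h : a = b
  · subst h; simp [hb, cVar, sVar, xVar]
  · simp [h, cVar, sVar, xVar]

lemma coord {b : Fin n} (hb : rev b = false) :
    JointPoly rev (Pi.single b 1) (fun q => q b) := by
  classical
  refine ⟨MvPolynomial.X (xVar b), fun μ hμ a => ?_, by simp [posEval, xVar]⟩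
  rw [MvPolynomial.support_X, Finset.mem_singleton] at hμ
  subst hμ
  by_cases h : a = b
  · subst h; simp [hb, cVar, sVar, xVar]
  · simp [h, cVar, sVar, xVar]

end JointPoly

/-! ### Degree bounds stable under partial derivatives -/

/-- `f` is a polynomial with joint degrees bounded by `D`, and each of its partial derivatives exists
and satisfies the same bound. -/
def JointSmooth {n : ℕ} (rev : Fin n → Bool) (D : Fin n → ℕ) (f : (Fin n → ℝ) → ℝ) : Prop :=
  JointPoly rev D f ∧ ∀ k : Fin n, ∃ f' : (Fin n → ℝ) → ℝ, JointPoly rev D f' ∧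
    ∀ q, HasDerivAt (fun t => f (Function.update q k t)) (f' q) (q k)

namespace JointSmooth

variable {n : ℕ} {rev : Fin n → Bool} {D E : Fin n → ℕ} {f g : (Fin n → ℝ) → ℝ}

lemma pd (h : JointSmooth rev D f) (k : Fin n) : JointPoly rev D (fun q => pd f k q) := by
  obtain ⟨f', hf', hd⟩ := h.2 k
  have : (fun q => _root_.pd f k q) = f' := funext fun q => (hd q).deriv
  rwa [this]

lemma mono (h : JointSmooth rev D f) (hDE : D ≤ E) : JointSmooth rev E f := by
  refine ⟨h.1.mono hDE, fun k => ?_⟩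
  obtain ⟨f', hf', hd⟩ := h.2 k
  exact ⟨f', hf'.mono hDE, hd⟩

lemma const (c : ℝ) : JointSmooth rev D (fun _ => c) :=
  ⟨.const c, fun _ => ⟨fun _ => 0, .const 0, fun _ => hasDerivAt_const _ _⟩⟩

lemma add (hf : JointSmooth rev D f) (hg : JointSmooth rev D g) :
    JointSmooth rev D (fun q => f q + g q) := by
  refine ⟨hf.1.add hg.1, fun k => ?_⟩
  obtain ⟨f', hf', hfd⟩ := hf.2 k
  obtain ⟨g', hg', hgd⟩ := hg.2 k
  exact ⟨_, hf'.add hg', fun q => (hfd q).fun_add (hgd q)⟩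

lemma mul (hf : JointSmooth rev D f) (hg : JointSmooth rev E g) :
    JointSmooth rev (D + E) (fun q => f q * g q) := by
  refine ⟨hf.1.mul hg.1, fun k => ?_⟩
  obtain ⟨f', hf', hfd⟩ := hf.2 k
  obtain ⟨g', hg', hgd⟩ := hg.2 k
  refine ⟨_, (hf'.mul hg.1).add (hf.1.mul hg'), fun q => ?_⟩
  simpa using (hfd q).fun_mul (hgd q)

lemma const_mul (c : ℝ) (hf : JointSmooth rev D f) : JointSmooth rev D (fun q => c * f q) := by
  simpa using (const (rev := rev) (D := 0) c).mul hf

lemma sum {ι : Type*} (s : Finset ι) {F : ι → (Fin n → ℝ) → ℝ}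
    (h : ∀ i ∈ s, JointSmooth rev D (F i)) : JointSmooth rev D (fun q => ∑ i ∈ s, F i q) := by
  classical
  induction s using Finset.induction_on with
  | empty => simpa using const 0
  | insert a s ha ih =>
    simp only [Finset.sum_insert ha]
    exact (h a (by simp)).add (ih fun i hi => h i (by simp [hi]))

lemma cos {b : Fin n} (hb : rev b = true) :
    JointSmooth rev (Pi.single b 1) (fun q => Real.cos (q b)) := by
  refine ⟨.cos hb, fun k => ?_⟩
  by_cases h : b = k
  · subst h
    refine ⟨fun q => -1 * Real.sin (q b), ?_, fun q => ?_⟩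
    · simpa using (JointPoly.const (rev := rev) (D := 0) (-1)).mul (.sin hb)
    · simpa using Real.hasDerivAt_cos (q b)
  · refine ⟨fun _ => 0, .const 0, fun q => ?_⟩
    simpa [Function.update_of_ne h] using hasDerivAt_const (q k) (Real.cos (q b))

lemma sin {b : Fin n} (hb : rev b = true) :
    JointSmooth rev (Pi.single b 1) (fun q => Real.sin (q b)) := by
  refine ⟨.sin hb, fun k => ?_⟩
  by_cases h : b = k
  · subst h
    exact ⟨_, .cos hb, fun q => by simpa using Real.hasDerivAt_sin (q b)⟩
  · refine ⟨fun _ => 0, .const 0, fun q => ?_⟩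
    simpa [Function.update_of_ne h] using hasDerivAt_const (q k) (Real.sin (q b))

lemma coord {b : Fin n} (hb : rev b = false) :
    JointSmooth rev (Pi.single b 1) (fun q => q b) := by
  refine ⟨.coord hb, fun k => ?_⟩
  by_cases h : b = k
  · subst h
    exact ⟨_, .const 1, fun q => by simpa using hasDerivAt_id' (q b)⟩
  · refine ⟨fun _ => 0, .const 0, fun q => ?_⟩
    simpa [Function.update_of_ne h] using hasDerivAt_const (q k) (q b)

end JointSmooth

/-! ### Degree bounds for the kinematics and the inertia matrix -/

section Robot

variable {n : ℕ} (rev : Fin n → Bool) (θ0 d0 aDH αDH : Fin n → ℝ)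

lemma jointSmooth_cos_dhTheta (b : Fin n) :
    JointSmooth rev (Pi.single b 1) (fun q => Real.cos (dhTheta rev θ0 q b)) := by
  cases hb : rev b
  · simpa [dhTheta, hb] using JointSmooth.const _
  · have h := ((JointSmooth.cos hb).const_mul (Real.cos (θ0 b))).add
      ((JointSmooth.sin hb).const_mul (-Real.sin (θ0 b)))
    convert h using 2
    simp [dhTheta, hb, Real.cos_add]
    ring

lemma jointSmooth_sin_dhTheta (b : Fin n) :
    JointSmooth rev (Pi.single b 1) (fun q => Real.sin (dhTheta rev θ0 q b)) := by
  cases hb : rev b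
  · simpa [dhTheta, hb] using JointSmooth.const _
  · have h := ((JointSmooth.cos hb).const_mul (Real.sin (θ0 b))).add
      ((JointSmooth.sin hb).const_mul (Real.cos (θ0 b)))
    convert h using 2
    simp [dhTheta, hb, Real.sin_add]

lemma jointSmooth_dhD (b : Fin n) :
    JointSmooth rev (Pi.single b 1) (fun q => dhD rev d0 q b) := by
  cases hb : rev b
  · simpa [dhD, hb] using (JointSmooth.const (d0 b)).add (JointSmooth.coord hb)
  · simpa [dhD, hb] using JointSmooth.const _

lemma jointSmooth_RzMat (b : Fin n) (r s : Fin 3) :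
    JointSmooth rev (Pi.single b 1) (fun q => RzMat (dhTheta rev θ0 q b) r s) := by
  have hc := jointSmooth_cos_dhTheta rev θ0 b
  have hs := jointSmooth_sin_dhTheta rev θ0 b
  have hs' := hs.const_mul (-1)
  simp only [neg_mul, one_mul] at hs'
  fin_cases r <;> fin_cases s <;>
    first
    | exact hc
    | exact hs
    | exact hs'
    | exact JointSmooth.const _

lemma jointSmooth_dhRrel (b : Fin n) (r s : Fin 3) :
    JointSmooth rev (Pi.single b 1) (fun q => dhRrel rev θ0 αDH q b r s) := by
  simp only [dhRrel, Matrix.mul_apply]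
  refine JointSmooth.sum _ fun t _ => ?_
  simpa using (jointSmooth_RzMat rev θ0 b r t).mul
    (JointSmooth.const (D := 0) (RxMat (αDH b) t s))

lemma jointSmooth_dhLrel (b : Fin n) (r : Fin 3) :
    JointSmooth rev (Pi.single b 1) (fun q => dhLrel rev θ0 d0 aDH q b r) := by
  simp only [dhLrel, Pi.add_apply, Matrix.mulVec, dotProduct]
  refine .add ?_ (.sum _ fun t _ => ?_)
  · fin_cases r
    · exact JointSmooth.const _
    · exact JointSmooth.const _
    · exact jointSmooth_dhD rev d0 b
  · simpa using (jointSmooth_RzMat rev θ0 b r t).mul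
      (JointSmooth.const (D := 0) (![aDH b, 0, 0] t))

/-- The relative rotation from frame `j` to frame `k` has degree one in the joints between them
and degree zero in the others. -/
lemma exists_dhR0_eq_mul {j k : ℕ} (hjk : j ≤ k) :
    ∃ M : (Fin n → ℝ) → Matrix (Fin 3) (Fin 3) ℝ,
      (∀ q, dhR0 rev θ0 αDH q k = dhR0 rev θ0 αDH q j * M q) ∧
      ∀ r s, JointSmooth rev (fun b => if j ≤ b.val ∧ b.val < k then 1 else 0)
        (fun q => M q r s) := by
  induction k, hjk using Nat.le_induction with
  | base => exact ⟨fun _ => 1, by simp, fun r s => .const _⟩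
  | succ k hk ih =>
    obtain ⟨M, hM, hMs⟩ := ih
    by_cases h : k < n
    · refine ⟨fun q => M q * dhRrel rev θ0 αDH q ⟨k, h⟩, fun q => ?_, fun r s => ?_⟩
      · simp [dhR0, h, hM, Matrix.mul_assoc]
      · simp only [Matrix.mul_apply]
        refine .sum _ fun t _ => ?_
        refine ((hMs r t).mul (jointSmooth_dhRrel rev θ0 αDH ⟨k, h⟩ t s)).mono fun b => ?_
        by_cases hb : b = ⟨k, h⟩
        · subst hb; simp [hk]
        · have hb' : b.val ≠ k := fun e => hb (Fin.ext e)
          simp only [Pi.add_apply, Pi.single_eq_of_ne hb]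
          split_ifs <;> omega
    · refine ⟨M, fun q => by simp [dhR0, h, hM], fun r s => (hMs r s).mono fun b => ?_⟩
      dsimp only
      split_ifs <;> omega

lemma jointSmooth_dhR0 (k : ℕ) (r s : Fin 3) :
    JointSmooth rev (fun b => if b.val < k then 1 else 0) (fun q => dhR0 rev θ0 αDH q k r s) := by
  obtain ⟨M, hM, hMs⟩ := exists_dhR0_eq_mul rev θ0 αDH (Nat.zero_le k)
  simpa [hM, dhR0] using hMs r s

lemma RzMat_orthogonal (x : ℝ) : (RzMat x)ᵀ * RzMat x = 1 := by
  have h := Real.sin_sq_add_cos_sq x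
  ext r s
  fin_cases r <;> fin_cases s <;> simp [RzMat, Matrix.mul_apply, Fin.sum_univ_three] <;> nlinarith

lemma RxMat_orthogonal (x : ℝ) : (RxMat x)ᵀ * RxMat x = 1 := by
  have h := Real.sin_sq_add_cos_sq x
  ext r s
  fin_cases r <;> fin_cases s <;> simp [RxMat, Matrix.mul_apply, Fin.sum_univ_three] <;> nlinarith

lemma transpose_mul_self_mul {A B : Matrix (Fin 3) (Fin 3) ℝ} (hA : Aᵀ * A = 1)
    (hB : Bᵀ * B = 1) : (A * B)ᵀ * (A * B) = 1 := by
  rw [Matrix.transpose_mul, Matrix.mul_assoc, ← Matrix.mul_assoc Aᵀ, hA, Matrix.one_mul, hB]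

lemma dhR0_orthogonal (q : Fin n → ℝ) (k : ℕ) :
    (dhR0 rev θ0 αDH q k)ᵀ * dhR0 rev θ0 αDH q k = 1 := by
  induction k with
  | zero => simp [dhR0]
  | succ k ih =>
    refine transpose_mul_self_mul ih ?_
    split_ifs
    · exact transpose_mul_self_mul (RzMat_orthogonal _) (RxMat_orthogonal _)
    · simp

lemma jointSmooth_dhCom (cloc : Fin n → Fin 3 → ℝ) (i : Fin n) (r : Fin 3) :
    JointSmooth rev 1 (fun q => dhCom rev θ0 d0 aDH αDH cloc q i r) := by
  simp only [dhCom, Pi.add_apply, Finset.sum_apply]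
  refine .add (.sum _ fun j _ => ?_) ?_
  · split_ifs
    · simp only [Matrix.mulVec, dotProduct]
      refine .sum _ fun t _ => ?_
      refine ((jointSmooth_dhR0 rev θ0 αDH j.val r t).mul
        (jointSmooth_dhLrel rev θ0 d0 aDH j t)).mono fun b => ?_
      by_cases hb : b = j
      · subst hb; simp
      · simp only [Pi.add_apply, Pi.single_eq_of_ne hb, Pi.one_apply]
        split_ifs <;> omega
    · exact .const _
  · simp only [Matrix.mulVec, dotProduct]
    refine .sum _ fun t _ => ?_
    refine ((jointSmooth_dhR0 rev θ0 αDH (i.val + 1) r t).mul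
      (JointSmooth.const (D := 0) (cloc i t))).mono fun b => ?_
    simp only [Pi.add_apply, Pi.one_apply, Pi.zero_apply]
    split_ifs <;> omega

/-- Orthogonality of `R_{j-1}^0` cancels the joints before `j`, so each joint enters
`J_{ω,i}ᵀ R_i^0` with degree at most one. -/
lemma jointPoly_dhJang_transpose_mul (i j : Fin n) (r : Fin 3) :
    JointPoly rev 1
      (fun q => ((dhJang rev θ0 αDH q i)ᵀ * dhR0 rev θ0 αDH q (i.val + 1)) j r) := by
  by_cases hji : j ≤ i
  · have hle : j.val ≤ i.val + 1 := Nat.le_succ_of_le hji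
    obtain ⟨M, hM, hMs⟩ := exists_dhR0_eq_mul rev θ0 αDH hle
    have key : ∀ q, ((dhJang rev θ0 αDH q i)ᵀ * dhR0 rev θ0 αDH q (i.val + 1)) j r
        = (if rev j then (1 : ℝ) else 0) * M q 2 r := by
      intro q
      have h1 : (dhR0 rev θ0 αDH q j.val)ᵀ * dhR0 rev θ0 αDH q (i.val + 1) = M q := by
        rw [hM, ← Matrix.mul_assoc, dhR0_orthogonal, Matrix.one_mul]
      rw [← h1]
      simp [dhJang, Matrix.mul_apply, hji, Matrix.mulVec, dotProduct, Fin.sum_univ_three]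
    simp only [key]
    refine (((hMs 2 r).const_mul _).1).mono fun b => ?_
    simp only [Pi.one_apply]
    split_ifs <;> omega
  · have key : ∀ q, ((dhJang rev θ0 αDH q i)ᵀ * dhR0 rev θ0 αDH q (i.val + 1)) j r = 0 := by
      intro q
      simp [dhJang, Matrix.mul_apply, hji]
    simp only [key]
    exact .const 0

lemma jointPoly_dhB (cloc : Fin n → Fin 3 → ℝ) (m : Fin n → ℝ)
    (Iner : Fin n → Matrix (Fin 3) (Fin 3) ℝ) (i j : Fin n) :
    JointPoly rev (1 + 1) (fun q => dhB rev θ0 d0 aDH αDH cloc m Iner q i j) := by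
  simp only [dhB, Matrix.sum_apply, Matrix.add_apply]
  refine .sum _ fun l _ => .add ?_ ?_
  · simp only [Matrix.smul_apply, smul_eq_mul, Matrix.mul_apply, Matrix.transpose_apply, dhJlin,
      Matrix.of_apply, Finset.mul_sum]
    refine .sum _ fun r _ => ?_
    have h := jointSmooth_dhCom rev θ0 d0 aDH αDH cloc l r
    simpa using (JointPoly.const (D := 0) (m l)).mul ((h.pd i).mul (h.pd j))
  · have key : ∀ q, ((dhJang rev θ0 αDH q l)ᵀ * dhR0 rev θ0 αDH q (l.val + 1) * Iner l *
          (dhR0 rev θ0 αDH q (l.val + 1))ᵀ * dhJang rev θ0 αDH q l) i j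
        = ∑ s, ∑ r, Iner l r s *
          (((dhJang rev θ0 αDH q l)ᵀ * dhR0 rev θ0 αDH q (l.val + 1)) i r *
          ((dhJang rev θ0 αDH q l)ᵀ * dhR0 rev θ0 αDH q (l.val + 1)) j s) := by
      intro q
      have e : (dhR0 rev θ0 αDH q (l.val + 1))ᵀ * dhJang rev θ0 αDH q l
          = ((dhJang rev θ0 αDH q l)ᵀ * dhR0 rev θ0 αDH q (l.val + 1))ᵀ := by
        rw [Matrix.transpose_mul, Matrix.transpose_transpose]
      rw [Matrix.mul_assoc _ (dhR0 rev θ0 αDH q (l.val + 1))ᵀ, e]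
      generalize (dhJang rev θ0 αDH q l)ᵀ * dhR0 rev θ0 αDH q (l.val + 1) = A
      simp only [Matrix.mul_apply, Matrix.transpose_apply, Finset.sum_mul]
      exact Finset.sum_congr rfl fun s _ => Finset.sum_congr rfl fun r _ => by ring
    simp only [key]
    refine .sum _ fun s _ => .sum _ fun r _ => ?_
    simpa using (JointPoly.const (D := 0) (Iner l r s)).mul
      ((jointPoly_dhJang_transpose_mul rev θ0 αDH l i r).mul
        (jointPoly_dhJang_transpose_mul rev θ0 αDH l j s))

end Robot

/-- Every entry `b_{ij}(q)` of the inertia matrix `B(q)` is a polynomial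
of total degree at most `2n` in the formal variables `c_r, s_r` (`r ∈ I_r`) and `x_p`
(`p ∈ I_p`), in which every monomial satisfies `deg c_b + deg s_b ≤ 2` for every
`b ∈ I_r` and `deg x_p ≤ 2` for every `p ∈ I_p`. -/
theorem inertia_matrix_entries_polynomial
    {n : ℕ} (rev : Fin n → Bool) (θ0 d0 aDH αDH : Fin n → ℝ)
    (cloc : Fin n → Fin 3 → ℝ) (m : Fin n → ℝ)
    (Iner : Fin n → Matrix (Fin 3) (Fin 3) ℝ) (hIner : ∀ i, (Iner i).IsSymm)
    (i j : Fin n) :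
    ∃ P : MvPolynomial (PosVar n) ℝ,
      P.totalDegree ≤ 2 * n ∧
      (∀ μ ∈ P.support, ∀ b : Fin n,
        μ (cVar b) + μ (sVar b) ≤ 2 ∧
        μ (xVar b) ≤ 2 ∧
        (rev b = false → μ (cVar b) = 0 ∧ μ (sVar b) = 0) ∧
        (rev b = true → μ (xVar b) = 0)) ∧
      ∀ q : Fin n → ℝ,
        MvPolynomial.eval (posEval q) P = dhB rev θ0 d0 aDH αDH cloc m Iner q i j := by
  obtain ⟨P, hP, he⟩ := jointPoly_dhB rev θ0 d0 aDH αDH cloc m Iner i j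
  refine ⟨P, ?_, fun μ hμ b => ?_, he⟩
  · refine Finset.sup_le fun μ hμ => ?_
    have hb : ∀ b : Fin n, μ (cVar b) + (μ (sVar b) + μ (xVar b)) ≤ 2 := by
      intro b
      have h := hP μ hμ b
      simp only [Pi.add_apply, Pi.one_apply] at h
      split_ifs at h <;> omega
    calc (μ.sum fun _ e => e) = ∑ b : Fin n, (μ (cVar b) + (μ (sVar b) + μ (xVar b))) := by
          rw [Finsupp.sum_fintype _ _ (by simp)]
          simp [Fintype.sum_sum_type, Finset.sum_add_distrib, cVar, sVar, xVar]
      _ ≤ ∑ _b : Fin n, 2 := Finset.sum_le_sum fun b _ => hb b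
      _ = 2 * n := by simp [mul_comm]
  · have h := hP μ hμ b
    simp only [Pi.add_apply, Pi.one_apply] at h
    cases hb : rev b <;> simp [hb] at h ⊢ <;> omega
end
end

section
/- For every i ∈ {1,…,n}, the i-th Coriolis contribution (C(q,qdot) qdot)_i = Σ_{j=1}^n Σ_{k=1}^n ( ∂b_{ij}/∂q_k − (1/2) ∂b_{jk}/∂q_i ) qdot_k qdot_j is a polynomial function of the augmented variables: there exists a real multivariate polynomial in formal variables c_r, s_r (r ∈ I_r), x_p (p ∈ I_p) and v_{jk} (1 ≤ j ≤ k ≤ n), of total degree at most 2n+1, whose every monomial satisfies deg(c_b) + deg(s_b) ≤ 2 for each b ∈ I_r, deg(x_p) ≤ 2 for each p ∈ I_p, and has total degree exactly 1 in the variables {v_{jk}}, and whose evaluation at c_r = cos(q_r), s_r = sin(q_r), x_p = q_p, v_{jk} = qdot_j qdot_k equals (C(q,qdot) qdot)_i for all q, qdot ∈ ℝ^n. -/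
/-!
Every function involved is a polynomial in `c_b, s_b` (revolute `b`) or `x_b` (prismatic `b`), and
the point is to control the degree in the variables of each joint separately.

The functions of joint degree at most `d b` in every joint `b` form a submodule `jointPoly rev d`,
multiplicative in `d` (`mul_mem_jointPoly`) and stable under `∂/∂q_k` (`pd_mem`), because the formal
derivation `c_k ↦ -s_k`, `s_k ↦ c_k`, `x_k ↦ 1` does not raise degrees. The entries of each relative
rotation and translation have degree at most one in their own joint and zero in the others, so the
centers of mass, hence the linear Jacobians, have degree at most one in each joint.

For the angular part the cumulative rotations are orthogonal, so `(R_{j-1}^0)ᵀ R_i^0` is the product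
of the relative rotations of the joints `j, …, i` (`relRot_mem`), again of degree at most one in
each joint. Consequently `B` (`dhB_mem`), and then its partial derivatives, have degree at most two
in each joint, i.e. total degree at most `2n`; the factor `q̇_j q̇_k` adds one variable `v_{jk}`.
-/

noncomputable section

open Matrix Real

/-! ### Functions of bounded degree in each joint -/

/-- Exponents of monomials in the admissible position variables (`c_b, s_b` for revolute `b`,
`x_b` for prismatic `b`) whose degree in the variables of joint `b` is at most `d b`. -/
def jointExps {n : ℕ} (rev : Fin n → Bool) (d : Fin n → ℕ) : Set (PosVar n →₀ ℕ) :=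
  {μ | ∀ b, μ (cVar b) + μ (sVar b) + μ (xVar b) ≤ d b ∧
    (rev b = false → μ (cVar b) = 0 ∧ μ (sVar b) = 0) ∧ (rev b = true → μ (xVar b) = 0)}

/-- A polynomial in the position variables, seen as a function of the configuration `q`. -/
def posFun {n : ℕ} : MvPolynomial (PosVar n) ℝ →ₗ[ℝ] ((Fin n → ℝ) → ℝ) :=
  LinearMap.pi fun q => (MvPolynomial.aeval (posEval q)).toLinearMap

/-- Functions of `q` that are polynomial in the admissible position variables, of degree at most
`d b` in the variables of each joint `b`. -/
def jointPoly {n : ℕ} (rev : Fin n → Bool) (d : Fin n → ℕ) : Submodule ℝ ((Fin n → ℝ) → ℝ) :=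
  (MvPolynomial.restrictSupport ℝ (jointExps rev d)).map posFun

section JointPoly

variable {n : ℕ} {rev : Fin n → Bool} {d d' : Fin n → ℕ}

lemma posFun_apply (P : MvPolynomial (PosVar n) ℝ) (q : Fin n → ℝ) :
    posFun P q = MvPolynomial.eval (posEval q) P := by
  simp [posFun, MvPolynomial.aeval_eq_eval]

lemma jointPoly_mono (h : ∀ b, d b ≤ d' b) {f : (Fin n → ℝ) → ℝ} (hf : f ∈ jointPoly rev d) :
    f ∈ jointPoly rev d' :=
  Submodule.map_mono (MvPolynomial.restrictSupport_mono (R := ℝ)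
    fun _ hμ b => ⟨(hμ b).1.trans (h b), (hμ b).2⟩) hf

lemma const_mem (c : ℝ) : (fun _ => c) ∈ jointPoly rev d := by
  refine ⟨MvPolynomial.monomial 0 c, ?_, ?_⟩
  · exact (MvPolynomial.monomial_mem_restrictSupport ℝ).2 (Or.inl fun b => by simp)
  · funext q
    simp [posFun_apply]

lemma mul_mem_jointPoly {f g : (Fin n → ℝ) → ℝ} (hf : f ∈ jointPoly rev d) (hg : g ∈ jointPoly rev d') :
    (fun q => f q * g q) ∈ jointPoly rev (fun b => d b + d' b) := by
  obtain ⟨P, hP, rfl⟩ := hf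
  obtain ⟨Q, hQ, rfl⟩ := hg
  refine ⟨P * Q, ?_, ?_⟩
  · have h := Submodule.mul_mem_mul hP hQ
    rw [← MvPolynomial.restrictSupport_add] at h
    refine MvPolynomial.restrictSupport_mono (R := ℝ) ?_ h
    rintro _ ⟨μ, hμ, ν, hν, rfl⟩ b
    have h1 := hμ b
    have h2 := hν b
    simp only [Finsupp.add_apply]
    refine ⟨by omega, fun h => ?_, fun h => ?_⟩
    · have := h1.2.1 h
      have := h2.2.1 h
      omega
    · have := h1.2.2 h
      have := h2.2.2 h
      omega
  · funext q
    simp [posFun_apply]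

lemma sum_mem_jointPoly {ι : Type*} (s : Finset ι) {f : ι → (Fin n → ℝ) → ℝ}
    (h : ∀ i ∈ s, f i ∈ jointPoly rev d) : (fun q => ∑ i ∈ s, f i q) ∈ jointPoly rev d := by
  have := Submodule.sum_mem _ h
  convert this using 1
  funext q
  simp

lemma add_mem_jointPoly {f g : (Fin n → ℝ) → ℝ} (hf : f ∈ jointPoly rev d) (hg : g ∈ jointPoly rev d) :
    (fun q => f q + g q) ∈ jointPoly rev d :=
  Submodule.add_mem _ hf hg

lemma const_mul_mem (c : ℝ) {f : (Fin n → ℝ) → ℝ} (hf : f ∈ jointPoly rev d) :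
    (fun q => c * f q) ∈ jointPoly rev d :=
  Submodule.smul_mem _ c hf

lemma var_mem (v : PosVar n) (h : Finsupp.single v 1 ∈ jointExps rev d) :
    (fun q => posEval q v) ∈ jointPoly rev d := by
  refine ⟨MvPolynomial.X v, ?_, ?_⟩
  · exact (MvPolynomial.monomial_mem_restrictSupport ℝ).2 (Or.inl h)
  · funext q
    simp [posFun_apply]

/-! ### Closure under partial derivatives -/

/-- The formal counterpart of `∂/∂q_k`: the derivation with `c_k ↦ -s_k`, `s_k ↦ c_k`, `x_k ↦ 1`
that kills the variables of the other joints. -/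
def formalPd (k : Fin n) : Derivation ℝ (MvPolynomial (PosVar n) ℝ) (MvPolynomial (PosVar n) ℝ) :=
  MvPolynomial.mkDerivation ℝ (Sum.elim
    (fun b => if b = k then -MvPolynomial.X (sVar k) else 0)
    (Sum.elim (fun b => if b = k then MvPolynomial.X (cVar k) else 0)
      (fun b => if b = k then 1 else 0)))

lemma hasDerivAt_eval (k : Fin n) (q : Fin n → ℝ) (P : MvPolynomial (PosVar n) ℝ) :
    HasDerivAt (fun t => MvPolynomial.eval (posEval (Function.update q k t)) P)
      (MvPolynomial.eval (posEval q) (formalPd k P)) (q k) := by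
  induction P using MvPolynomial.induction_on with
  | C a => simpa [formalPd, MvPolynomial.derivation_C] using hasDerivAt_const (q k) a
  | add P Q hP hQ => simpa only [map_add] using hP.fun_add hQ
  | mul_X P v hP =>
    have hv : HasDerivAt (fun t => posEval (Function.update q k t) v)
        (MvPolynomial.eval (posEval q) (formalPd k (MvPolynomial.X v))) (q k) := by
      rw [formalPd, MvPolynomial.mkDerivation_X]
      rcases v with b | b | b <;> by_cases hb : b = k
      · subst hb
        simpa only [posEval, sVar, Sum.elim_inl, Sum.elim_inr, Function.update_self, if_true, map_neg,
          MvPolynomial.eval_X] using Real.hasDerivAt_cos (q b)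
      · simpa only [posEval, Sum.elim_inl, Function.update_of_ne hb, if_neg hb, map_zero] using
          hasDerivAt_const (q k) (Real.cos (q b))
      · subst hb
        simpa only [posEval, cVar, Sum.elim_inl, Sum.elim_inr, Function.update_self, if_true,
          MvPolynomial.eval_X] using Real.hasDerivAt_sin (q b)
      · simpa only [posEval, Sum.elim_inl, Sum.elim_inr, Function.update_of_ne hb, if_neg hb,
          map_zero] using hasDerivAt_const (q k) (Real.sin (q b))
      · subst hb
        simpa only [posEval, Sum.elim_inr, Function.update_self, if_true, map_one] using
          hasDerivAt_id' (q b)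
      · simpa only [posEval, Sum.elim_inr, Function.update_of_ne hb, if_neg hb, map_zero] using
          hasDerivAt_const (q k) (q b)
    have := hP.fun_mul hv
    simp only [Function.update_eq_self] at this
    simp only [map_mul, MvPolynomial.eval_X, Derivation.leibniz, map_add, smul_eq_mul]
    refine this.congr_deriv ?_
    ring

lemma formalPd_mem (k : Fin n) {P : MvPolynomial (PosVar n) ℝ}
    (hP : P ∈ MvPolynomial.restrictSupport ℝ (jointExps rev d)) :
    formalPd k P ∈ MvPolynomial.restrictSupport ℝ (jointExps rev d) := by
  rw [MvPolynomial.restrictSupport_eq_span] at hP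
  induction hP using Submodule.span_induction with
  | zero => simp
  | add x y _ _ hx hy => rw [map_add]; exact Submodule.add_mem _ hx hy
  | smul a x _ hx => rw [Derivation.map_smul]; exact Submodule.smul_mem _ _ hx
  | mem x hx =>
    obtain ⟨μ, hμ, rfl⟩ := hx
    simp only [formalPd, MvPolynomial.mkDerivation_monomial, one_smul]
    refine Submodule.sum_mem _ fun v hv => ?_
    have hv : μ v ≠ 0 := by simpa using hv
    -- Each term replaces one factor `c_k`, `s_k`, `x_k` by `s_k`, `c_k`, `1` respectively.
    rcases v with b | b | b <;> by_cases hb : b = k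
    · subst hb
      simp only [Sum.elim_inl, if_true, smul_eq_mul, mul_neg, MvPolynomial.X,
        MvPolynomial.monomial_mul]
      refine Submodule.neg_mem _ ((MvPolynomial.monomial_mem_restrictSupport ℝ).2 (Or.inl ?_))
      intro b'
      have := hμ b'
      by_cases hbb : b = b'
      · subst hbb
        simp [cVar, sVar, xVar] at this ⊢
        grind
      · simpa [cVar, sVar, xVar, hbb, Finsupp.single_apply] using this
    · simp [hb]
    · subst hb
      simp only [Sum.elim_inl, Sum.elim_inr, if_true, smul_eq_mul, MvPolynomial.X,
        MvPolynomial.monomial_mul]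
      refine (MvPolynomial.monomial_mem_restrictSupport ℝ).2 (Or.inl ?_)
      intro b'
      have := hμ b'
      by_cases hbb : b = b'
      · subst hbb
        simp [cVar, sVar, xVar] at this ⊢
        grind
      · simpa [cVar, sVar, xVar, hbb, Finsupp.single_apply] using this
    · simp [hb]
    · subst hb
      simp only [Sum.elim_inr, if_true, smul_eq_mul, mul_one]
      refine (MvPolynomial.monomial_mem_restrictSupport ℝ).2 (Or.inl ?_)
      intro b'
      have := hμ b'
      by_cases hbb : b = b'
      · subst hbb
        simp [cVar, sVar, xVar] at this ⊢
        grind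
      · simpa [cVar, sVar, xVar, hbb, Finsupp.single_apply] using this
    · simp [hb]

lemma pd_mem (k : Fin n) {f : (Fin n → ℝ) → ℝ} (hf : f ∈ jointPoly rev d) :
    (fun q => pd f k q) ∈ jointPoly rev d := by
  obtain ⟨P, hP, rfl⟩ := hf
  refine ⟨formalPd k P, formalPd_mem k hP, ?_⟩
  funext q
  rw [posFun_apply, pd, ← (hasDerivAt_eval k q P).deriv]
  simp only [posFun_apply]

/-! ### Kinematics -/

/-- All entries of a `q`-dependent matrix lie in `jointPoly rev d`. -/
def MatPoly (rev : Fin n → Bool) (d : Fin n → ℕ) {ι κ : Type*}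
    (M : (Fin n → ℝ) → Matrix ι κ ℝ) : Prop :=
  ∀ i j, (fun q => M q i j) ∈ jointPoly rev d

lemma MatPoly.mul {ι κ τ : Type*} [Fintype κ] {M : (Fin n → ℝ) → Matrix ι κ ℝ}
    {N : (Fin n → ℝ) → Matrix κ τ ℝ} (hM : MatPoly rev d M) (hN : MatPoly rev d' N) :
    MatPoly rev (fun b => d b + d' b) (fun q => M q * N q) := fun i j => by
  simp only [Matrix.mul_apply]
  exact sum_mem_jointPoly _ fun k _ => mul_mem_jointPoly (hM i k) (hN k j)

lemma MatPoly.mono {ι κ : Type*} {M : (Fin n → ℝ) → Matrix ι κ ℝ}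
    (hM : MatPoly rev d M) (h : ∀ b, d b ≤ d' b) : MatPoly rev d' M :=
  fun i j => jointPoly_mono h (hM i j)

lemma MatPoly.const {ι κ : Type*} (A : Matrix ι κ ℝ) : MatPoly rev d (fun _ => A) :=
  fun i j => const_mem (A i j)

lemma MatPoly.transpose {ι κ : Type*} {M : (Fin n → ℝ) → Matrix ι κ ℝ}
    (hM : MatPoly rev d M) : MatPoly rev d (fun q => (M q)ᵀ) :=
  fun i j => hM j i

lemma cos_theta_mem (θ0 : Fin n → ℝ) (b : Fin n) :
    (fun q => Real.cos (dhTheta rev θ0 q b)) ∈ jointPoly rev (Pi.single b 1) := by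
  unfold dhTheta
  by_cases h : rev b = true
  · simp only [h, if_true, Real.cos_add, sub_eq_add_neg, ← neg_mul]
    refine add_mem_jointPoly (const_mul_mem _ (var_mem (cVar b) ?_)) (const_mul_mem _ (var_mem (sVar b) ?_))
    all_goals
      intro b'
      by_cases hb : b = b'
      · subst hb
        simp [cVar, sVar, xVar, h]
      · simp [cVar, sVar, xVar, hb]
  · simp only [if_neg h]
    exact const_mem _

lemma sin_theta_mem (θ0 : Fin n → ℝ) (b : Fin n) :
    (fun q => Real.sin (dhTheta rev θ0 q b)) ∈ jointPoly rev (Pi.single b 1) := by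
  unfold dhTheta
  by_cases h : rev b = true
  · simp only [h, if_true, Real.sin_add]
    refine add_mem_jointPoly (const_mul_mem _ (var_mem (cVar b) ?_)) (const_mul_mem _ (var_mem (sVar b) ?_))
    all_goals
      intro b'
      by_cases hb : b = b'
      · subst hb
        simp [cVar, sVar, xVar, h]
      · simp [cVar, sVar, xVar, hb]
  · simp only [if_neg h]
    exact const_mem _

lemma dhD_mem (d0 : Fin n → ℝ) (b : Fin n) :
    (fun q => dhD rev d0 q b) ∈ jointPoly rev (Pi.single b 1) := by
  unfold dhD
  by_cases h : rev b = true
  · simp only [h, if_true]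
    exact const_mem _
  · simp only [h]
    refine add_mem_jointPoly (const_mem _) (var_mem (xVar b) ?_)
    intro b'
    by_cases hb : b = b'
    · subst hb
      simp [cVar, sVar, xVar, h]
    · simp [cVar, sVar, xVar, hb]

lemma RzMat_mem (θ0 : Fin n → ℝ) (b : Fin n) :
    MatPoly rev (Pi.single b 1) (fun q => RzMat (dhTheta rev θ0 q b)) := by
  have hc := cos_theta_mem (rev := rev) θ0 b
  have hs := sin_theta_mem (rev := rev) θ0 b
  have hs' : (fun q => -Real.sin (dhTheta rev θ0 q b)) ∈ jointPoly rev (Pi.single b 1) :=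
    Submodule.neg_mem _ hs
  intro i j
  fin_cases i <;> fin_cases j <;> simp [RzMat] <;>
    first | exact hc | exact hs | exact hs' | exact const_mem _

lemma dhRrel_mem (θ0 αDH : Fin n → ℝ) (b : Fin n) :
    MatPoly rev (Pi.single b 1) (fun q => dhRrel rev θ0 αDH q b) :=
  ((RzMat_mem θ0 b).mul (MatPoly.const (d := 0) (RxMat (αDH b)))).mono fun _ => by simp

lemma dhLrel_mem (θ0 d0 aDH : Fin n → ℝ) (b : Fin n) (r : Fin 3) :
    (fun q => dhLrel rev θ0 d0 aDH q b r) ∈ jointPoly rev (Pi.single b 1) := by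
  simp only [dhLrel, Pi.add_apply, Matrix.mulVec, dotProduct]
  refine add_mem_jointPoly ?_ (sum_mem_jointPoly _ fun s _ => ?_)
  · fin_cases r
    · exact const_mem _
    · exact const_mem _
    · exact dhD_mem d0 b
  · have h := mul_mem_jointPoly (RzMat_mem (rev := rev) θ0 b r s) (const_mem (d := 0) (![aDH b, 0, 0] s))
    exact jointPoly_mono (fun b' => by simp) h

lemma RzMat_orth (θ : ℝ) : (RzMat θ)ᵀ * RzMat θ = 1 := by
  ext i j
  fin_cases i <;> fin_cases j <;>
    simp [RzMat, Matrix.mul_apply, Fin.sum_univ_three] <;>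
    nlinarith [Real.sin_sq_add_cos_sq θ]

lemma RxMat_orth (θ : ℝ) : (RxMat θ)ᵀ * RxMat θ = 1 := by
  ext i j
  fin_cases i <;> fin_cases j <;>
    simp [RxMat, Matrix.mul_apply, Fin.sum_univ_three] <;>
    nlinarith [Real.sin_sq_add_cos_sq θ]

lemma dhR0_orth (rev : Fin n → Bool) (θ0 αDH q : Fin n → ℝ) (j : ℕ) :
    (dhR0 rev θ0 αDH q j)ᵀ * dhR0 rev θ0 αDH q j = 1 := by
  induction j with
  | zero => simp [dhR0]
  | succ j ih =>
    rw [dhR0, Matrix.transpose_mul, Matrix.mul_assoc, ← Matrix.mul_assoc _ (dhR0 rev θ0 αDH q j), ih,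
      Matrix.one_mul]
    split_ifs with h
    · rw [dhRrel, Matrix.transpose_mul, Matrix.mul_assoc, ← Matrix.mul_assoc _ (RzMat _),
        RzMat_orth, Matrix.one_mul, RxMat_orth]
    · simp

/-- The relative rotation `(R_j^0)ᵀ R_k^0 = R_{j+1}^j ⋯ R_k^{k-1}` involves only the joints
`j+1, …, k`, each to degree at most one. This is where orthogonality of `R_j^0` matters: the naive
bound would be degree two in the joints `1, …, j`. -/
lemma relRot_mem (rev : Fin n → Bool) (θ0 αDH : Fin n → ℝ) {j k : ℕ} (hjk : j ≤ k) :
    MatPoly rev (fun b => if j ≤ b.val ∧ b.val < k then 1 else 0)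
      (fun q => (dhR0 rev θ0 αDH q j)ᵀ * dhR0 rev θ0 αDH q k) := by
  induction k, hjk using Nat.le_induction with
  | base =>
    simp only [dhR0_orth]
    exact MatPoly.const _
  | succ k hjk ih =>
    simp only [dhR0, ← Matrix.mul_assoc]
    by_cases h : k < n
    · simp only [h, dif_pos]
      refine (ih.mul (dhRrel_mem θ0 αDH ⟨k, h⟩)).mono fun b => ?_
      by_cases hb : b = ⟨k, h⟩
      · subst hb
        simp [hjk]
      · have : b.val ≠ k := fun h' => hb (Fin.ext h')
        simp only [Pi.single_apply, hb, if_false]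
        split_ifs <;> omega
    · simp only [h, dif_neg, not_false_eq_true, Matrix.mul_one]
      refine ih.mono fun b => ?_
      split_ifs <;> omega

lemma dhR0_mem (rev : Fin n → Bool) (θ0 αDH : Fin n → ℝ) (k : ℕ) :
    MatPoly rev (fun b => if b.val < k then 1 else 0) (fun q => dhR0 rev θ0 αDH q k) := by
  have := relRot_mem rev θ0 αDH (Nat.zero_le k)
  simpa [dhR0] using this

lemma dhCom_mem (rev : Fin n → Bool) (θ0 d0 aDH αDH : Fin n → ℝ) (cloc : Fin n → Fin 3 → ℝ)
    (i : Fin n) (r : Fin 3) :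
    (fun q => dhCom rev θ0 d0 aDH αDH cloc q i r) ∈ jointPoly rev (fun _ => 1) := by
  simp only [dhCom, Pi.add_apply, Finset.sum_apply]
  refine add_mem_jointPoly (sum_mem_jointPoly _ fun j _ => ?_) ?_
  · by_cases h : j ≤ i
    · simp only [h, if_true, Matrix.mulVec, dotProduct]
      refine sum_mem_jointPoly _ fun s _ => ?_
      have hm := mul_mem_jointPoly (dhR0_mem rev θ0 αDH j r s) (dhLrel_mem θ0 d0 aDH j s)
      refine jointPoly_mono (fun b => ?_) hm
      by_cases hb : b = j
      · subst hb
        simp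
      · simp only [Pi.single_apply, hb, if_false]
        split_ifs <;> omega
    · simp only [h, if_false]
      exact const_mem _
  · simp only [Matrix.mulVec, dotProduct]
    refine sum_mem_jointPoly _ fun s _ => ?_
    have hm := mul_mem_jointPoly (dhR0_mem rev θ0 αDH (i + 1) r s) (const_mem (d := 0) (cloc i s))
    refine jointPoly_mono (fun b => ?_) hm
    simp only [Pi.zero_apply]
    split_ifs <;> omega

lemma dhJlin_mem (rev : Fin n → Bool) (θ0 d0 aDH αDH : Fin n → ℝ) (cloc : Fin n → Fin 3 → ℝ)
    (i : Fin n) :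
    MatPoly rev (fun _ => 1) (fun q => dhJlin rev θ0 d0 aDH αDH cloc q i) :=
  fun r k => pd_mem k (dhCom_mem rev θ0 d0 aDH αDH cloc i r)

/-- The angular Jacobian expressed in the frame of link `i` has degree at most one in each joint:
its `j`-th column is `λ_j ((R_{j-1}^0)ᵀ R_i^0)ᵀ e_3`. -/
lemma dhJang_mem (rev : Fin n → Bool) (θ0 αDH : Fin n → ℝ) (i : Fin n) :
    MatPoly rev (fun _ => 1)
      (fun q => (dhJang rev θ0 αDH q i)ᵀ * dhR0 rev θ0 αDH q (i.val + 1)) := by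
  intro j s
  by_cases h : j ≤ i
  · have key : ∀ q, ((dhJang rev θ0 αDH q i)ᵀ * dhR0 rev θ0 αDH q (i.val + 1)) j s =
        (if rev j then (1 : ℝ) else 0) *
          ((dhR0 rev θ0 αDH q j.val)ᵀ * dhR0 rev θ0 αDH q (i.val + 1)) 2 s := by
      intro q
      simp [dhJang, h, Matrix.mul_apply, Matrix.mulVec, dotProduct, Fin.sum_univ_three]
    simp only [key]
    have hle : j.val ≤ i.val + 1 := by
      have : j.val ≤ i.val := h
      omega
    refine const_mul_mem _ (jointPoly_mono (fun b => ?_) (relRot_mem rev θ0 αDH hle 2 s))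
    split_ifs <;> omega
  · have key : ∀ q, ((dhJang rev θ0 αDH q i)ᵀ * dhR0 rev θ0 αDH q (i.val + 1)) j s = 0 := by
      intro q
      simp [dhJang, h, Matrix.mul_apply]
    simp only [key]
    exact const_mem _

lemma dhB_mem (rev : Fin n → Bool) (θ0 d0 aDH αDH : Fin n → ℝ)
    (cloc : Fin n → Fin 3 → ℝ) (m : Fin n → ℝ) (Iner : Fin n → Matrix (Fin 3) (Fin 3) ℝ) :
    MatPoly rev (fun _ => 2) (fun q => dhB rev θ0 d0 aDH αDH cloc m Iner q) := by
  intro j k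
  simp only [dhB, Matrix.sum_apply, Matrix.add_apply, Matrix.smul_apply, smul_eq_mul]
  refine sum_mem_jointPoly _ fun i _ => add_mem_jointPoly (const_mul_mem _ ?_) ?_
  · have hJ := dhJlin_mem rev θ0 d0 aDH αDH cloc i
    exact hJ.transpose.mul hJ j k
  · have hA := dhJang_mem rev θ0 αDH i
    have := ((hA.mul (MatPoly.const (d := 0) (Iner i))).mul hA.transpose) j k
    simp only [Matrix.transpose_mul, Matrix.transpose_transpose, Matrix.mul_assoc] at this ⊢
    exact jointPoly_mono (fun b => by simp) this

/-! ### Adjoining the velocity products -/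

/-- Exponents of the monomials allowed in the Coriolis polynomial. -/
def corExps (rev : Fin n → Bool) : Set (PosVar n ⊕ VelIdx n →₀ ℕ) :=
  {μ | (∀ b : Fin n,
      μ (Sum.inl (cVar b)) + μ (Sum.inl (sVar b)) + μ (Sum.inl (xVar b)) ≤ 2 ∧
      (rev b = false → μ (Sum.inl (cVar b)) = 0 ∧ μ (Sum.inl (sVar b)) = 0) ∧
      (rev b = true → μ (Sum.inl (xVar b)) = 0)) ∧
    (∑ jk : VelIdx n, μ (Sum.inr jk)) = 1}

lemma rename_mul_X_mem {P : MvPolynomial (PosVar n) ℝ}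
    (hP : P ∈ MvPolynomial.restrictSupport ℝ (jointExps rev fun _ => 2)) (jk : VelIdx n) :
    MvPolynomial.rename Sum.inl P * MvPolynomial.X (Sum.inr jk) ∈
      MvPolynomial.restrictSupport ℝ (corExps rev) := by
  rw [MvPolynomial.restrictSupport_eq_span] at hP
  induction hP using Submodule.span_induction with
  | zero => simp
  | add x y _ _ hx hy => rw [map_add, add_mul]; exact Submodule.add_mem _ hx hy
  | smul a x _ hx => rw [map_smul, smul_mul_assoc]; exact Submodule.smul_mem _ _ hx
  | mem x hx =>
    obtain ⟨μ, hμ, rfl⟩ := hx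
    simp only [MvPolynomial.rename_monomial, MvPolynomial.X, MvPolynomial.monomial_mul]
    refine (MvPolynomial.monomial_mem_restrictSupport ℝ).2 (Or.inl ⟨fun b => ?_, ?_⟩)
    · simpa [Finsupp.mapDomain_apply Sum.inl_injective] using hμ b
    · have h0 : ∀ v : VelIdx n, Finsupp.mapDomain (Sum.inl : PosVar n → PosVar n ⊕ VelIdx n) μ
          (Sum.inr v) = 0 := fun v => Finsupp.mapDomain_of_notMem_range _ _ (by simp)
      simp [h0, Finsupp.single_apply]

lemma exists_corPoly (f : Fin n → Fin n → (Fin n → ℝ) → ℝ)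
    (hf : ∀ j k, f j k ∈ jointPoly rev fun _ => 2) :
    ∃ P ∈ MvPolynomial.restrictSupport ℝ (corExps rev), ∀ q qd : Fin n → ℝ,
      MvPolynomial.eval
          (Sum.elim (posEval q) fun jk : VelIdx n => qd jk.val.1 * qd jk.val.2) P
        = ∑ j, ∑ k, f j k q * qd k * qd j := by
  choose P hP hPf using hf
  -- `q̇_j q̇_k` is represented by the variable `v` at the sorted pair.
  refine ⟨∑ j, ∑ k, MvPolynomial.rename Sum.inl (P j k) *
    MvPolynomial.X (Sum.inr ⟨(min j k, max j k), min_le_max⟩), ?_, fun q qd => ?_⟩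
  · exact Submodule.sum_mem _ fun j _ => Submodule.sum_mem _ fun k _ => rename_mul_X_mem (hP j k) _
  · simp only [map_sum, map_mul, MvPolynomial.eval_X, MvPolynomial.eval_rename, Sum.elim_inr,
      Sum.elim_comp_inl]
    refine Finset.sum_congr rfl fun j _ => Finset.sum_congr rfl fun k _ => ?_
    rw [← hPf j k, posFun_apply]
    rcases le_total j k with h | h <;> simp [h] <;> ring

lemma totalDegree_le {P : MvPolynomial (PosVar n ⊕ VelIdx n) ℝ}
    (hP : P ∈ MvPolynomial.restrictSupport ℝ (corExps rev)) : P.totalDegree ≤ 2 * n + 1 := by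
  refine Finset.sup_le fun μ hμ => ?_
  obtain ⟨h1, h2⟩ := (MvPolynomial.mem_restrictSupport_iff ℝ).1 hP hμ
  rw [Finsupp.sum_fintype _ _ fun _ => rfl]
  simp only [Fintype.sum_sum_type]
  rw [h2, ← Finset.sum_add_distrib, ← Finset.sum_add_distrib]
  have := Finset.sum_le_card_nsmul Finset.univ
    (fun b : Fin n => μ (Sum.inl (cVar b)) + (μ (Sum.inl (sVar b)) + μ (Sum.inl (xVar b)))) 2
    (fun b _ => by have := (h1 b).1; omega)
  simp only [Finset.card_univ, Fintype.card_fin, smul_eq_mul] at this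
  simp only [cVar, sVar, xVar] at this
  omega

end JointPoly

/-- The `i`-th Coriolis contribution `(C(q,q̇) q̇)_i` is a polynomial of
total degree at most `2n+1` in the formal variables `c_r, s_r` (`r ∈ I_r`), `x_p`
(`p ∈ I_p`) and `v_{jk}` (`j ≤ k`), in which every monomial satisfies
`deg c_b + deg s_b ≤ 2` (`b ∈ I_r`), `deg x_p ≤ 2` (`p ∈ I_p`) and has total degree
exactly `1` in the variables `v_{jk}`; its evaluation at `c_r = cos q_r, s_r = sin q_r,
x_p = q_p, v_{jk} = q̇_j q̇_k` equals `(C(q,q̇) q̇)_i` for all `q, q̇`. -/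
theorem coriolis_polynomial
    {n : ℕ} (rev : Fin n → Bool) (θ0 d0 aDH αDH : Fin n → ℝ)
    (cloc : Fin n → Fin 3 → ℝ) (m : Fin n → ℝ)
    (Iner : Fin n → Matrix (Fin 3) (Fin 3) ℝ) (hIner : ∀ i, (Iner i).IsSymm)
    (i : Fin n) :
    ∃ P : MvPolynomial (PosVar n ⊕ VelIdx n) ℝ,
      P.totalDegree ≤ 2 * n + 1 ∧
      (∀ μ ∈ P.support,
        (∀ b : Fin n,
          μ (Sum.inl (cVar b)) + μ (Sum.inl (sVar b)) ≤ 2 ∧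
          μ (Sum.inl (xVar b)) ≤ 2 ∧
          (rev b = false → μ (Sum.inl (cVar b)) = 0 ∧ μ (Sum.inl (sVar b)) = 0) ∧
          (rev b = true → μ (Sum.inl (xVar b)) = 0)) ∧
        (∑ jk : VelIdx n, μ (Sum.inr jk)) = 1) ∧
      ∀ q qd : Fin n → ℝ,
        MvPolynomial.eval
            (Sum.elim (posEval q) fun jk : VelIdx n => qd jk.val.1 * qd jk.val.2) P
          = dhCor rev θ0 d0 aDH αDH cloc m Iner q qd i := by
  have hB := dhB_mem rev θ0 d0 aDH αDH cloc m Iner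
  obtain ⟨P, hP, hev⟩ := exists_corPoly (rev := rev)
    (fun j k q => pd (fun q' => dhB rev θ0 d0 aDH αDH cloc m Iner q' i j) k q
      - (1 / 2) * pd (fun q' => dhB rev θ0 d0 aDH αDH cloc m Iner q' j k) i q)
    (fun j k => Submodule.sub_mem _ (pd_mem k (hB i j)) (const_mul_mem _ (pd_mem i (hB j k))))
  refine ⟨P, totalDegree_le hP, fun μ hμ => ?_, hev⟩
  obtain ⟨h1, h2⟩ := (MvPolynomial.mem_restrictSupport_iff ℝ).1 hP hμ
  refine ⟨fun b => ⟨?_, ?_, (h1 b).2⟩, h2⟩ <;> have := (h1 b).1 <;> omega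
end
end

section
/- The Multiplicative Polynomial Kernel is positive semidefinite: fix p, d, N ∈ ℕ, points x_1, …, x_N ∈ ℝ^d, and for each s = 1, …, p a real number σ_s and a diagonal matrix Σ_s ∈ ℝ^{d×d} with nonnegative diagonal entries. Then the N×N matrix K with entries K_{hj} = ∏_{s=1}^{p} ( σ_s^2 + x_h^T Σ_s x_j ) is positive semidefinite. -/
/-!
Each factor `σ_s² + x_hᵀ Σ_s x_j` has as Gram matrix the sum of the rank-one matrix of the constant
vector `σ_s` and the congruence `X Σ_s Xᵀ` of a nonnegative diagonal matrix, hence is positive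
semidefinite. The kernel's Gram matrix is the entrywise product of these, and the Schur product
theorem (`Matrix.PosSemidef.hadamard`) preserves positive semidefiniteness.
-/

noncomputable section

open Matrix

theorem affine_gram_posSemidef {d N : ℕ} (x : Fin N → Fin d → ℝ)
    (c : ℝ) (w : Fin d → ℝ) (hw : ∀ i, 0 ≤ w i) :
    (Matrix.of fun h j : Fin N =>
      c ^ 2 + x h ⬝ᵥ (Matrix.diagonal w).mulVec (x j)).PosSemidef := by
  have hconst := posSemidef_vecMulVec_self_star (fun _ : Fin N => c)
  have hlin := (PosSemidef.diagonal (show 0 ≤ w from hw)).mul_mul_conjTranspose_same (Matrix.of x)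
  convert hconst.add hlin using 1
  ext h j
  rw [of_apply, Matrix.add_apply, Matrix.mul_apply]
  simp only [mul_diagonal]
  simp [vecMulVec_apply, dotProduct, mulVec_diagonal, sq, mul_assoc]

/-- Schur product theorem for a finite family; the empty product is the all-ones matrix. -/
theorem posSemidef_entrywise_prod {N : ℕ} {ι : Type*} (S : Finset ι)
    (A : ι → Matrix (Fin N) (Fin N) ℝ) (hA : ∀ s, (A s).PosSemidef) :
    (Matrix.of fun h j : Fin N => ∏ s ∈ S, A s h j).PosSemidef := by
  classical
  induction S using Finset.induction_on with
  | empty =>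
    convert posSemidef_vecMulVec_self_star (fun _ : Fin N => (1 : ℝ)) using 1
    ext h j
    simp [vecMulVec_apply]
  | insert a S ha ih =>
    have hprod : (A a ⊙ Matrix.of fun h j => ∏ s ∈ S, A s h j).PosSemidef := (hA a).hadamard ih
    convert hprod using 1
    ext h j
    simp [Finset.prod_insert ha]

/-- The Multiplicative Polynomial Kernel is positive semidefinite:
for points `x_1, …, x_N ∈ ℝ^d`, reals `σ_s` and diagonal matrices `Σ_s` with nonnegative
diagonal entries `w s`, the Gram matrix `K_{hj} = ∏_{s=1}^p (σ_s² + x_hᵀ Σ_s x_j)` is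
positive semidefinite. -/
theorem mpk_gram_posSemidef
    (p d N : ℕ) (x : Fin N → Fin d → ℝ)
    (σ : Fin p → ℝ) (w : Fin p → Fin d → ℝ) (hw : ∀ s i, 0 ≤ w s i) :
    (Matrix.of fun h j : Fin N =>
      ∏ s : Fin p, (σ s ^ 2 + x h ⬝ᵥ (Matrix.diagonal (w s)).mulVec (x j))).PosSemidef := by
  exact posSemidef_entrywise_prod Finset.univ _
    fun s => affine_gram_posSemidef x (σ s) (w s) (hw s)
end
end

section
/- Feature expansion of the Multiplicative Polynomial Kernel: fix p, d ∈ ℕ, and for each s = 1, …, p a real number σ_s and a diagonal matrix Σ_s ∈ ℝ^{d×d} with nonnegative diagonal entries w_{s,1}, …, w_{s,d}. Then there exist nonnegative reals c_α, indexed by multi-indices α ∈ ℕ^d with |α| ≤ p, such that for all x, y ∈ ℝ^d, ∏_{s=1}^{p} ( σ_s^2 + x^T Σ_s y ) = Σ_{α : |α| ≤ p} c_α x^α y^α, where x^α = ∏_{i=1}^d x_i^{α_i}. Moreover, if σ_s^2 > 0 for every s and w_{s,i} > 0 for every s and i, then c_α > 0 for every multi-index α with |α| ≤ p. -/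
/-!
Write each factor as a sum over `Option (Fin d)`: the choice `none` contributes `σ_s²`, the choice
`some i` contributes `w_{s,i} x_i y_i`. Expanding the product gives a sum over all choice functions
`f : Fin p → Option (Fin d)`, and the term of `f` is a nonnegative constant times `x^α y^α`, where
`α i` counts the factors in which `f` picks `some i`. Hence `c_α` is the sum of these constants over
the choice functions with count `α`. Under strict positivity every constant is positive, so
`c_α > 0` as soon as some choice function has count `α`; such a function exists exactly when
`|α| ≤ p` (`exists_choiceCount_eq`).
-/

noncomputable section

open Matrix

/-- The (finite) set of multi-indices `α : Fin d → ℕ` with `|α| = Σ_i α_i ≤ p`. -/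
def multiIdx (d p : ℕ) : Finset (Fin d → ℕ) :=
  (Fintype.piFinset fun _ : Fin d => Finset.range (p + 1)).filter fun α => ∑ i, α i ≤ p

/-- The multi-index of a choice function: `choiceCount f i` is the number of factors `s` in which
`f` picks the `i`-th coordinate term; `none` stands for the choice of the constant term. -/
def choiceCount {p d : ℕ} (f : Fin p → Option (Fin d)) : Fin d → ℕ :=
  fun i => (Finset.univ.filter fun s => f s = some i).card

/-- The coefficient of the term picked by a choice in the factor with constant term `a` and
weights `v`. -/
def choiceCoeff {d : ℕ} (a : ℝ) (v : Fin d → ℝ) (o : Option (Fin d)) : ℝ :=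
  o.elim a v

lemma mem_multiIdx {d p : ℕ} {α : Fin d → ℕ} : α ∈ multiIdx d p ↔ ∑ i, α i ≤ p := by
  simp only [multiIdx, Finset.mem_filter, Fintype.mem_piFinset, Finset.mem_range,
    and_iff_right_iff_imp]
  intro h i
  have := Finset.single_le_sum (f := α) (fun j _ => Nat.zero_le _) (Finset.mem_univ i)
  omega

lemma sum_choiceCount_le {p d : ℕ} (f : Fin p → Option (Fin d)) :
    ∑ i, choiceCount f i ≤ p := by
  have h := Finset.card_eq_sum_card_fiberwise (f := f) (s := Finset.univ) (t := Finset.univ)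
    (fun _ _ => by simp)
  rw [Fintype.sum_option, Finset.card_univ, Fintype.card_fin] at h
  simp only [choiceCount]
  omega

/-- Every multi-index of total degree at most `p` is realised: embed `Σ i, Fin (α i)` into `Fin p`
and pick `some i` on the image of the `i`-th block, `none` off the image. -/
lemma exists_choiceCount_eq {p d : ℕ} {α : Fin d → ℕ} (h : ∑ i, α i ≤ p) :
    ∃ f : Fin p → Option (Fin d), choiceCount f = α := by
  have hcard : Fintype.card (Σ i, Fin (α i)) ≤ Fintype.card (Fin p) := by simpa using h
  obtain ⟨e⟩ := Function.Embedding.nonempty_of_card_le hcard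
  refine ⟨Function.extend e (fun t => some t.1) (fun _ => none), funext fun i => ?_⟩
  have himage : (Finset.univ.filter fun s =>
      Function.extend e (fun t => some t.1) (fun _ => none) s = some i)
      = Finset.univ.image fun k : Fin (α i) => e ⟨i, k⟩ := by
    ext s
    simp only [Finset.mem_filter, Finset.mem_univ, true_and, Finset.mem_image]
    constructor
    · intro hs
      by_cases hex : ∃ t, e t = s
      · obtain ⟨⟨j, k⟩, rfl⟩ := hex
        rw [e.injective.extend_apply] at hs
        obtain rfl : j = i := by simpa using hs
        exact ⟨k, rfl⟩
      · rw [Function.extend_apply' _ _ _ hex] at hs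
        simp at hs
    · rintro ⟨k, rfl⟩
      rw [e.injective.extend_apply]
  rw [choiceCount, himage, Finset.card_image_of_injective, Finset.card_fin]
  intro k l hkl
  simpa using e.injective hkl

lemma prod_choice_monomial {p d : ℕ} (f : Fin p → Option (Fin d)) (z : Fin d → ℝ) :
    ∏ s, (f s).elim 1 z = ∏ i, z i ^ choiceCount f i := by
  rw [← Finset.prod_fiberwise Finset.univ f, Fintype.prod_option]
  have hconst : ∀ o : Option (Fin d), ∏ s with f s = o, (f s).elim 1 z
      = o.elim 1 z ^ (Finset.univ.filter fun s => f s = o).card := by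
    intro o
    apply Finset.prod_eq_pow_card
    intro s hs
    rw [(Finset.mem_filter.mp hs).2]
  simp [hconst, choiceCount]

/-- Feature expansion of the Multiplicative Polynomial Kernel: with
nonnegative diagonal entries `w s` of the matrices `Σ_s`, there exist nonnegative reals
`c_α` (for multi-indices `α` with `|α| ≤ p`) such that
`∏_{s=1}^p (σ_s² + xᵀ Σ_s y) = Σ_{|α| ≤ p} c_α x^α y^α` for all `x, y ∈ ℝ^d`; moreover,
if all `σ_s² > 0` and all `w s i > 0`, then `c_α > 0` for every `α` with `|α| ≤ p`. -/
theorem mpk_feature_expansion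
    (p d : ℕ) (σ : Fin p → ℝ) (w : Fin p → Fin d → ℝ) (hw : ∀ s i, 0 ≤ w s i) :
    ∃ c : (Fin d → ℕ) → ℝ,
      (∀ α ∈ multiIdx d p, 0 ≤ c α) ∧
      (∀ x y : Fin d → ℝ,
        ∏ s : Fin p, (σ s ^ 2 + x ⬝ᵥ (Matrix.diagonal (w s)).mulVec y)
          = ∑ α ∈ multiIdx d p, c α * (∏ i, x i ^ α i) * ∏ i, y i ^ α i) ∧
      ((∀ s, 0 < σ s ^ 2) → (∀ s i, 0 < w s i) →
        ∀ α ∈ multiIdx d p, 0 < c α) := by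
  classical
  refine ⟨fun α => ∑ f : Fin p → Option (Fin d) with choiceCount f = α,
    ∏ s, choiceCoeff (σ s ^ 2) (w s) (f s), ?_, ?_, ?_⟩
  · intro α _
    refine Finset.sum_nonneg fun f _ => Finset.prod_nonneg fun s _ => ?_
    cases f s with
    | none => exact sq_nonneg _
    | some i => exact hw s i
  · intro x y
    have hfactor : ∀ s, σ s ^ 2 + x ⬝ᵥ (Matrix.diagonal (w s)).mulVec y
        = ∑ o : Option (Fin d),
            choiceCoeff (σ s ^ 2) (w s) o * o.elim 1 (fun i => x i * y i) := by
      intro s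
      simp only [Fintype.sum_option, choiceCoeff, Option.elim, mul_one, dotProduct,
        Matrix.mulVec_diagonal]
      congr 1
      exact Finset.sum_congr rfl fun i _ => by ring
    simp only [hfactor]
    rw [Fintype.prod_sum, ← Finset.sum_fiberwise_of_maps_to (g := choiceCount)
      (t := multiIdx d p) (fun f _ => mem_multiIdx.mpr (sum_choiceCount_le f))]
    refine Finset.sum_congr rfl fun α _ => ?_
    rw [mul_assoc, Finset.sum_mul]
    refine Finset.sum_congr rfl fun f hf => ?_
    rw [Finset.prod_mul_distrib, prod_choice_monomial, (Finset.mem_filter.mp hf).2,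
      ← Finset.prod_mul_distrib]
    simp only [mul_pow]
  · intro hσ hw' α hα
    obtain ⟨f, hf⟩ := exists_choiceCount_eq (mem_multiIdx.mp hα)
    refine Finset.sum_pos (fun g _ => Finset.prod_pos fun s _ => ?_) ⟨f, by simp [hf]⟩
    cases g s with
    | none => exact hσ s
    | some i => exact hw' s i
end
end

section
/- Monomial expansion of the GIP kernel: with all MPK hyperparameters strictly positive (all σ_s^2 > 0 and all diagonal entries of every Σ_s strictly positive in every factor), the GIP kernel k(x̄, x̄') = [ ∏_{b=1}^{N_r} k^{(2)}_b( (q_{c_b}, q_{s_b}), (q'_{c_b}, q'_{s_b}) ) ] · [ ∏_{b=1}^{N_p} k^{(2)}_{p,b}( q_{p_b}, q'_{p_b} ) ] · k^{(1)}( (qddot, qdot_v), (qddot', qdot_v') ) satisfies k(x̄, x̄') = Σ_{α ∈ A} c_α x̄^α (x̄')^α with c_α > 0 for every α ∈ A, where A is the set of multi-indices α ∈ ℕ^γ such that: for each revolute index b, the degrees of q_{c_b} and q_{s_b} in α sum to at most 2; for each prismatic index b, the degree of q_{p_b} in α is at most 2; and the total degree of α restricted to the (qddot, qdot_v) coordinates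 is at most 1. -/
/-!
Each factor of the kernel is a polynomial with positive coefficients in the products `x g * y g`
of the coordinates of its own block: a revolute block gives all monomials of degree at most `2` in
two variables (`revolute_expansion`), a prismatic block all powers up to `2`
(`prismatic_expansion`), and the acceleration/velocity block all monomials of total degree at most
`1` (`linear_expansion`). The blocks use disjoint sets of coordinates, so on multiplying out the
factors every `α ∈ gipIdx` arises from exactly one choice of a monomial in each block, and `c α` is
the product of the block coefficients.
-/

noncomputable section

open Matrix

/-- Coordinates of the augmented input `x̄ = (q_c, q_s, q_p, q̇_v, q̈) ∈ ℝ^γ`: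
`.inl (.inl b) ↦ q_{c_b}`, `.inl (.inr b) ↦ q_{s_b}`, `.inr (.inl b) ↦ q_{p_b}`,
`.inr (.inr (.inl k)) ↦ q̈_k`, `.inr (.inr (.inr jk)) ↦ (q̇_v)_{jk}`. -/
abbrev GipVar (Nr Np n : ℕ) := (Fin Nr ⊕ Fin Nr) ⊕ (Fin Np ⊕ (Fin n ⊕ VelIdx n))

/-- The (finite) set `A` of multi-indices `α ∈ ℕ^γ` such that, for each revolute index
`b`, the degrees of `q_{c_b}` and `q_{s_b}` sum to at most `2`; for each prismatic index
`b`, the degree of `q_{p_b}` is at most `2`; and the total degree in the `(q̈, q̇_v)`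
coordinates is at most `1`. -/
def gipIdx (Nr Np n : ℕ) : Finset (GipVar Nr Np n → ℕ) :=
  (Fintype.piFinset fun _ : GipVar Nr Np n => Finset.range 3).filter fun α =>
    (∀ b : Fin Nr, α (Sum.inl (Sum.inl b)) + α (Sum.inl (Sum.inr b)) ≤ 2) ∧
    (∀ b : Fin Np, α (Sum.inr (Sum.inl b)) ≤ 2) ∧
    (∑ i : Fin n ⊕ VelIdx n, α (Sum.inr (Sum.inr i))) ≤ 1

/-- Exponent pairs of total degree at most `2` (the monomials of one revolute block). -/
def revIdx : Finset (ℕ × ℕ) :=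
  (Finset.range 3 ×ˢ Finset.range 3).filter fun p => p.1 + p.2 ≤ 2

/-- Multi-indices of total degree at most `1`. The bound `range 3` on each exponent is implied by
the degree condition; it matches the form of `gipIdx`. -/
def linIdx (ι : Type*) [Fintype ι] [DecidableEq ι] : Finset (ι → ℕ) :=
  (Fintype.piFinset fun _ : ι => Finset.range 3).filter fun β => ∑ i, β i ≤ 1

lemma revolute_expansion (σ : Fin 2 → ℝ) (w : Fin 2 → Fin 2 → ℝ)
    (hσ : ∀ s, 0 < σ s ^ 2) (hw : ∀ s i, 0 < w s i) :
    ∃ C : ℕ × ℕ → ℝ, (∀ p ∈ revIdx, 0 < C p) ∧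
      ∀ a a' d d' : ℝ, ∏ s : Fin 2, (σ s ^ 2 + w s 0 * a * a' + w s 1 * d * d')
        = ∑ p ∈ revIdx, C p * ((a ^ p.1 * d ^ p.2) * (a' ^ p.1 * d' ^ p.2)) := by
  have hidx : revIdx = {(0, 0), (0, 1), (0, 2), (1, 0), (1, 1), (2, 0)} := by decide
  refine ⟨fun p =>
    if p = (0, 0) then σ 0 ^ 2 * σ 1 ^ 2
    else if p = (0, 1) then σ 0 ^ 2 * w 1 1 + σ 1 ^ 2 * w 0 1
    else if p = (0, 2) then w 0 1 * w 1 1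
    else if p = (1, 0) then σ 0 ^ 2 * w 1 0 + σ 1 ^ 2 * w 0 0
    else if p = (1, 1) then w 0 0 * w 1 1 + w 0 1 * w 1 0
    else w 0 0 * w 1 0, ?_, ?_⟩
  · intro p _
    have h0 := hσ 0
    have h1 := hσ 1
    have h00 := hw 0 0
    have h01 := hw 0 1
    have h10 := hw 1 0
    have h11 := hw 1 1
    dsimp only
    split_ifs <;> positivity
  · intro a a' d d'
    rw [hidx]
    simp [Fin.prod_univ_two]
    ring

lemma prismatic_expansion (σ w : Fin 2 → ℝ) (hσ : ∀ s, 0 < σ s ^ 2) (hw : ∀ s, 0 < w s) :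
    ∃ P : ℕ → ℝ, (∀ k ∈ Finset.range 3, 0 < P k) ∧
      ∀ a a' : ℝ, ∏ s : Fin 2, (σ s ^ 2 + w s * a * a')
        = ∑ k ∈ Finset.range 3, P k * (a ^ k * a' ^ k) := by
  refine ⟨fun k => if k = 0 then σ 0 ^ 2 * σ 1 ^ 2
    else if k = 1 then σ 0 ^ 2 * w 1 + σ 1 ^ 2 * w 0 else w 0 * w 1, ?_, ?_⟩
  · intro k _
    have h0 := hσ 0
    have h1 := hσ 1
    have h0' := hw 0
    have h1' := hw 1
    dsimp only
    split_ifs <;> positivity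
  · intro a a'
    simp [Fin.prod_univ_two, Finset.sum_range_succ]
    ring

lemma linIdx_eq (ι : Type*) [Fintype ι] [DecidableEq ι] :
    linIdx ι = insert 0 (Finset.univ.image fun i : ι => (Pi.single i 1 : ι → ℕ)) := by
  ext β
  simp only [linIdx, Finset.mem_filter, Fintype.mem_piFinset, Finset.mem_range,
    Finset.mem_insert, Finset.mem_image, Finset.mem_univ, true_and]
  constructor
  · rintro ⟨-, h⟩
    by_cases h0 : β = 0
    · exact Or.inl h0
    · obtain ⟨i, hi⟩ := Function.ne_iff.mp h0
      refine Or.inr ⟨i, ?_⟩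
      have hsplit := Finset.add_sum_erase Finset.univ β (Finset.mem_univ i)
      simp only [Pi.zero_apply] at hi
      have hrest : ∑ j ∈ Finset.univ.erase i, β j = 0 := by omega
      funext j
      by_cases hj : j = i
      · subst hj
        rw [Pi.single_eq_same]
        omega
      · rw [Pi.single_eq_of_ne hj]
        exact (Finset.sum_eq_zero_iff.mp hrest j (by simp [hj])).symm
  · rintro (rfl | ⟨i, rfl⟩)
    · simp
    · refine ⟨fun j => ?_, by simp⟩
      by_cases hj : j = i
      · subst hj; simp
      · simp [hj]

lemma linear_expansion {ι : Type*} [Fintype ι] [DecidableEq ι] (σ : ℝ) (w : ι → ℝ)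
    (hσ : 0 < σ ^ 2) (hw : ∀ i, 0 < w i) :
    ∃ V : (ι → ℕ) → ℝ, (∀ β ∈ linIdx ι, 0 < V β) ∧
      ∀ u v : ι → ℝ, σ ^ 2 + ∑ i, w i * u i * v i
        = ∑ β ∈ linIdx ι, V β * ((∏ i, u i ^ β i) * ∏ i, v i ^ β i) := by
  have hne : ∀ i : ι, (Pi.single i 1 : ι → ℕ) ≠ 0 := fun i => by simp
  have hval : ∀ i : ι, ∑ j, w j * ((Pi.single i 1 : ι → ℕ) j : ℝ) = w i := fun i => by
    simp [Pi.single_apply]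
  have hmon : ∀ (u : ι → ℝ) (i : ι), ∏ j, u j ^ (Pi.single i 1 : ι → ℕ) j = u i := fun u i => by
    simp [Pi.single_apply, pow_ite]
  -- On a unit multi-index `e_i` the linear form `∑ j, w j * β j` returns the coefficient `w i`.
  refine ⟨fun β => if β = 0 then σ ^ 2 else ∑ j, w j * (β j : ℝ), ?_, ?_⟩
  · intro β hβ
    rw [linIdx_eq, Finset.mem_insert, Finset.mem_image] at hβ
    rcases hβ with rfl | ⟨i, -, rfl⟩
    · simpa using hσ
    · simpa only [hne i, if_false, hval] using hw i
  · intro u v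
    have hinj : Function.Injective fun i : ι => (Pi.single i 1 : ι → ℕ) :=
      fun i j h => by
        by_contra hij
        have := congrFun h i
        simp [hij] at this
    rw [linIdx_eq, Finset.sum_insert (by simp), Finset.sum_image hinj.injOn]
    simp only [hne, if_false, hval, hmon, mul_assoc]
    simp

/-- Monomial expansion of the GIP kernel: with all MPK hyperparameters
strictly positive, the GIP kernel satisfies
`k(x̄, x̄') = Σ_{α ∈ A} c_α x̄^α (x̄')^α` with `c_α > 0` for every `α ∈ A`, where `A`
is the index set `gipIdx`. -/
theorem gip_monomial_expansion
    (Nr Np n : ℕ) (hn : n = Nr + Np)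
    (σcs : Fin Nr → Fin 2 → ℝ) (wcs : Fin Nr → Fin 2 → Fin 2 → ℝ)
    (σp : Fin Np → Fin 2 → ℝ) (wp : Fin Np → Fin 2 → ℝ)
    (σav : ℝ) (wav : Fin n ⊕ VelIdx n → ℝ)
    (hσcs : ∀ b s, 0 < σcs b s ^ 2) (hwcs : ∀ b s i, 0 < wcs b s i)
    (hσp : ∀ b s, 0 < σp b s ^ 2) (hwp : ∀ b s, 0 < wp b s)
    (hσav : 0 < σav ^ 2) (hwav : ∀ i, 0 < wav i) :
    ∃ c : (GipVar Nr Np n → ℕ) → ℝ,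
      (∀ α ∈ gipIdx Nr Np n, 0 < c α) ∧
      ∀ x y : GipVar Nr Np n → ℝ,
        (∏ b : Fin Nr, ∏ s : Fin 2,
          (σcs b s ^ 2
            + wcs b s 0 * x (Sum.inl (Sum.inl b)) * y (Sum.inl (Sum.inl b))
            + wcs b s 1 * x (Sum.inl (Sum.inr b)) * y (Sum.inl (Sum.inr b)))) *
        (∏ b : Fin Np, ∏ s : Fin 2,
          (σp b s ^ 2 + wp b s * x (Sum.inr (Sum.inl b)) * y (Sum.inr (Sum.inl b)))) *
        (σav ^ 2 + ∑ i : Fin n ⊕ VelIdx n,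
          wav i * x (Sum.inr (Sum.inr i)) * y (Sum.inr (Sum.inr i)))
        = ∑ α ∈ gipIdx Nr Np n,
            c α * (∏ g : GipVar Nr Np n, x g ^ α g) * ∏ g : GipVar Nr Np n, y g ^ α g := by
  choose C hC hCeq using fun b => revolute_expansion (σcs b) (wcs b) (hσcs b) (hwcs b)
  choose P hP hPeq using fun b => prismatic_expansion (σp b) (wp b) (hσp b) (hwp b)
  obtain ⟨V, hV, hVeq⟩ := linear_expansion σav wav hσav hwav
  refine ⟨fun α => (∏ b, C b (α (Sum.inl (Sum.inl b)), α (Sum.inl (Sum.inr b)))) *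
    (∏ b, P b (α (Sum.inr (Sum.inl b)))) * V (fun i => α (Sum.inr (Sum.inr i))), ?_, ?_⟩
  · intro α hα
    simp only [gipIdx, Finset.mem_filter, Fintype.mem_piFinset] at hα
    obtain ⟨hr, h2, -, h1⟩ := hα
    refine mul_pos (mul_pos (Finset.prod_pos fun b _ => hC b _ ?_)
      (Finset.prod_pos fun b _ => hP b _ (hr _))) (hV _ ?_)
    · simp only [revIdx, Finset.mem_filter, Finset.mem_product]
      exact ⟨⟨hr _, hr _⟩, h2 b⟩
    · simp only [linIdx, Finset.mem_filter, Fintype.mem_piFinset]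
      exact ⟨fun i => hr _, h1⟩
  · intro x y
    simp only [hCeq, hPeq]
    rw [hVeq (fun i => x (Sum.inr (Sum.inr i))) (fun i => y (Sum.inr (Sum.inr i))),
      Finset.prod_univ_sum, Finset.prod_univ_sum, Finset.sum_mul_sum, ← Finset.sum_product',
      Finset.sum_mul_sum, ← Finset.sum_product']
    -- A multi-index is the same thing as a choice of exponents in each block.
    refine Finset.sum_nbij'
      (fun t => Sum.elim (Sum.elim (fun b => (t.1.1 b).1) (fun b => (t.1.1 b).2))
        (Sum.elim t.1.2 t.2))
      (fun α => ((fun b => (α (Sum.inl (Sum.inl b)), α (Sum.inl (Sum.inr b))),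
        fun b => α (Sum.inr (Sum.inl b))), fun i => α (Sum.inr (Sum.inr i)))) ?_ ?_ ?_ ?_ ?_
    · rintro ⟨⟨f, g⟩, β⟩ ht
      simp only [Finset.mem_product, Fintype.mem_piFinset, revIdx, linIdx, Finset.mem_filter] at ht
      obtain ⟨⟨hf, hg⟩, hβ, hβ1⟩ := ht
      simp only [gipIdx, Finset.mem_filter, Fintype.mem_piFinset]
      refine ⟨?_, fun b => (hf b).2, fun b => ?_, hβ1⟩
      · rintro ((b | b) | (b | i))
        · exact (hf b).1.1
        · exact (hf b).1.2
        · exact hg b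
        · exact hβ i
      · have := Finset.mem_range.mp (hg b)
        simp only [Sum.elim_inr, Sum.elim_inl]
        omega
    · intro α hα
      simp only [gipIdx, Finset.mem_filter, Fintype.mem_piFinset] at hα
      obtain ⟨hr, h2, -, h1⟩ := hα
      simp only [Finset.mem_product, Fintype.mem_piFinset, revIdx, linIdx, Finset.mem_filter]
      exact ⟨⟨fun b => ⟨⟨hr _, hr _⟩, h2 b⟩, fun b => hr _⟩, fun i => hr _, h1⟩
    · rintro ⟨⟨f, g⟩, β⟩ _
      rfl
    · intro α _
      funext v
      rcases v with ((b | b) | (b | i)) <;> rfl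
    · rintro ⟨⟨f, g⟩, β⟩ _
      simp only [Fintype.prod_sum_type, Sum.elim_inl, Sum.elim_inr, Finset.prod_mul_distrib]
      ring
end
end
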